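/- arXiv:1703.06872 — 2 statements merged into one kernel-verified Lean document; each statement's English description precedes it below -/
import Mathlib

section
/- For every integer k ≥ 1 and every x ∈ ℝ, lim_{t→b−} E[ (∂_x A(t, x + z√(t−a)))^{2k} · V(t, x, x + z√(t−a)) ] = 1. -/
/-! As `t → b⁻`, the function `A b m' t` is a Gaussian smoothing of `|·|` at scale `√(b - t) → 0`.
Differentiating under the integral sign, its derivative at `y` is the average of the sign of
`y + z√(b-t)` under the Gaussian law tilted by `exp(m'|y + z√(b-t)|)`; hence it is at most `1` in
absolute value, and it converges to the sign of the limit point as long as that point is not `0`.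
Since `V` is `exp(m A)` normalised by its integral, the expectation is the quotient of
`E[(∂ₓA)^{2k} exp(m A)]` and `E[exp(m A)]`. By dominated convergence both converge to
`E[exp(m|x + z√(b-a)|)] > 0`, because an even power of a sign is `1` almost surely. -/

open MeasureTheory ProbabilityTheory

/-- `A(t,x) = (1/m') log E[exp(m'|x + z√(b-t)|)]` for a standard Gaussian `z`. -/
noncomputable def A (b m' t x : ℝ) : ℝ :=
  (1 / m') * Real.log (∫ z, Real.exp (m' * |x + z * Real.sqrt (b - t)|) ∂(gaussianReal 0 1))

/-- `B(t,x) = (1/m) log E[exp(m A(t, x + z√(t-a)))]` for a standard Gaussian `z`. -/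
noncomputable def B (a b m m' t x : ℝ) : ℝ :=
  (1 / m) * Real.log
    (∫ z, Real.exp (m * A b m' t (x + z * Real.sqrt (t - a))) ∂(gaussianReal 0 1))

/-- `V(t,x,y) = exp(m (A(t,y) - B(t,x)))`. -/
noncomputable def V (a b m m' t x y : ℝ) : ℝ :=
  Real.exp (m * (A b m' t y - B a b m m' t x))

/-- The sign function in the form `u / |u|`; the value at `0` is `0`. -/
noncomputable def sgn (u : ℝ) : ℝ := u / |u|

lemma abs_sgn_le (u : ℝ) : |sgn u| ≤ 1 := by
  unfold sgn
  rw [abs_div, abs_abs]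
  exact div_self_le_one _

lemma measurable_sgn : Measurable sgn := by
  unfold sgn
  fun_prop

lemma sgn_sq {u : ℝ} (hu : u ≠ 0) : sgn u ^ 2 = 1 := by
  unfold sgn
  rw [div_pow, sq_abs]
  exact div_self (pow_ne_zero 2 hu)

lemma continuousAt_sgn {u : ℝ} (hu : u ≠ 0) : ContinuousAt sgn u :=
  continuousAt_id.div continuous_abs.continuousAt (abs_ne_zero.mpr hu)

lemma hasDerivAt_abs_sgn {u : ℝ} (hu : u ≠ 0) : HasDerivAt (fun v : ℝ => |v|) (sgn u) u := by
  have h := hasDerivAt_abs hu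
  refine h.congr_deriv ?_
  unfold sgn
  rcases lt_or_gt_of_ne hu with h | h
  · rw [abs_of_neg h, sign_neg h, div_neg, div_self hu]; simp
  · rw [abs_of_pos h, sign_pos h, div_self hu]; simp

lemma integrable_exp_abs (c : ℝ) :
    Integrable (fun z : ℝ => Real.exp (c * |z|)) (gaussianReal 0 1) :=
  integrable_exp_mul_abs (X := fun z : ℝ => z) (integrable_exp_mul_gaussianReal c)
    (integrable_exp_mul_gaussianReal (-c))

lemma exp_abs_le {c y s R S : ℝ} (z : ℝ) (hc : 0 ≤ c) (hy : |y| ≤ R) (hs : 0 ≤ s) (hS : s ≤ S) :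
    Real.exp (c * |y + z * s|) ≤ Real.exp (c * R) * Real.exp (c * S * |z|) := by
  rw [← Real.exp_add]
  apply Real.exp_le_exp.mpr
  have h1 : |y + z * s| ≤ R + S * |z| := by
    calc |y + z * s| ≤ |y| + |z * s| := abs_add_le _ _
      _ = |y| + s * |z| := by rw [abs_mul, abs_of_nonneg hs, mul_comm]
      _ ≤ R + S * |z| := by gcongr
  nlinarith [mul_le_mul_of_nonneg_left h1 hc]

lemma integrable_exp_abs_add {c s : ℝ} (y : ℝ) (hc : 0 ≤ c) (hs : 0 ≤ s) :
    Integrable (fun z : ℝ => Real.exp (c * |y + z * s|)) (gaussianReal 0 1) := by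
  refine ((integrable_exp_abs (c * s)).const_mul (Real.exp (c * |y|))).mono' ?_ ?_
  · exact (by fun_prop : Continuous fun z : ℝ => Real.exp (c * |y + z * s|)).aestronglyMeasurable
  · refine Filter.Eventually.of_forall fun z => ?_
    rw [Real.norm_of_nonneg (Real.exp_pos _).le]
    exact exp_abs_le z hc le_rfl hs le_rfl

lemma integral_exp_abs_pos {c s : ℝ} (y : ℝ) (hc : 0 ≤ c) (hs : 0 ≤ s) :
    0 < ∫ z, Real.exp (c * |y + z * s|) ∂(gaussianReal 0 1) :=
  integral_exp_pos (integrable_exp_abs_add y hc hs)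

lemma ae_add_mul_ne_zero (y : ℝ) {s : ℝ} (hs : s ≠ 0) :
    ∀ᵐ z ∂(gaussianReal 0 1), y + z * s ≠ 0 := by
  have : NullSingletonClass (gaussianReal 0 1) := nullSingletonClass_gaussianReal one_ne_zero
  have h : ∀ᵐ z ∂(gaussianReal 0 1), z ≠ -y / s := by
    simp [ae_iff]
  filter_upwards [h] with z hz h0
  apply hz
  rw [eq_div_iff hs]
  linarith

/-- Expectation of `sign(y + zs)` under the Gaussian law tilted by `exp(c|y + zs|)`. -/
noncomputable def tiltedSign (c s y : ℝ) : ℝ :=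
  (∫ z, sgn (y + z * s) * Real.exp (c * |y + z * s|) ∂(gaussianReal 0 1)) /
    ∫ z, Real.exp (c * |y + z * s|) ∂(gaussianReal 0 1)

lemma abs_tiltedSign_le {c s : ℝ} (y : ℝ) (hc : 0 ≤ c) (hs : 0 ≤ s) :
    |tiltedSign c s y| ≤ 1 := by
  unfold tiltedSign
  rw [abs_div, abs_of_pos (integral_exp_abs_pos y hc hs)]
  apply div_le_one_of_le₀ _ (integral_exp_abs_pos y hc hs).le
  rw [← Real.norm_eq_abs]
  refine norm_integral_le_of_norm_le (integrable_exp_abs_add y hc hs) ?_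
  refine Filter.Eventually.of_forall fun z => ?_
  rw [norm_mul, Real.norm_of_nonneg (Real.exp_pos _).le, Real.norm_eq_abs]
  exact mul_le_of_le_one_left (Real.exp_pos _).le (abs_sgn_le _)

lemma lipschitz_exp_abs {c s z R : ℝ} (hc : 0 ≤ c) (hs : 0 ≤ s) :
    LipschitzOnWith (Real.nnabs (c * (Real.exp (c * R) * Real.exp (c * s * |z|))))
      (fun y => Real.exp (c * |y + z * s|)) {y | |y| ≤ R} := by
  -- Convexity of `exp` gives `exp u - exp v ≤ (u - v) exp u`.
  have key : ∀ u v : ℝ, Real.exp u - Real.exp v ≤ (u - v) * Real.exp u := by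
    intro u v
    have h := Real.add_one_le_exp (v - u)
    have h2 : Real.exp v = Real.exp u * Real.exp (v - u) := by rw [← Real.exp_add]; ring_nf
    rw [h2]
    nlinarith [Real.exp_pos u]
  have main : ∀ p q : ℝ, |p| ≤ R →
      Real.exp (c * |p + z * s|) - Real.exp (c * |q + z * s|) ≤
        c * (Real.exp (c * R) * Real.exp (c * s * |z|)) * |p - q| := by
    intro p q hp
    have h1 : |p + z * s| - |q + z * s| ≤ |p - q| := by
      have := abs_sub_abs_le_abs_sub (p + z * s) (q + z * s)
      simpa using this
    calc _ ≤ (c * |p + z * s| - c * |q + z * s|) * Real.exp (c * |p + z * s|) := key _ _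
      _ = c * (|p + z * s| - |q + z * s|) * Real.exp (c * |p + z * s|) := by ring
      _ ≤ c * |p - q| * (Real.exp (c * R) * Real.exp (c * s * |z|)) :=
          mul_le_mul (by gcongr) (exp_abs_le z hc hp hs le_rfl) (Real.exp_pos _).le (by positivity)
      _ = _ := by ring
  refine LipschitzOnWith.of_dist_le_mul fun p hp q hq => ?_
  have hK : 0 ≤ c * (Real.exp (c * R) * Real.exp (c * s * |z|)) := by positivity
  rw [Real.coe_nnabs, abs_of_nonneg hK, Real.dist_eq, Real.dist_eq]
  refine abs_sub_le_iff.mpr ⟨main p q hp, ?_⟩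
  rw [abs_sub_comm]
  exact main q p hq

lemma hasDerivAt_integral_exp_abs {c s : ℝ} (y : ℝ) (hc : 0 ≤ c) (hs : 0 < s) :
    HasDerivAt (fun y => ∫ z, Real.exp (c * |y + z * s|) ∂(gaussianReal 0 1))
      (∫ z, c * (sgn (y + z * s) * Real.exp (c * |y + z * s|)) ∂(gaussianReal 0 1)) y := by
  refine (hasDerivAt_integral_of_dominated_loc_of_lip (s := Metric.ball y 1)
    (bound := fun z => c * (Real.exp (c * (|y| + 1)) * Real.exp (c * s * |z|)))
    (Metric.ball_mem_nhds y one_pos) ?_ (integrable_exp_abs_add y hc hs.le) ?_ ?_ ?_ ?_).2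
  · exact Filter.Eventually.of_forall fun w => (integrable_exp_abs_add w hc hs.le).1
  · have := measurable_sgn
    exact Measurable.aestronglyMeasurable (by fun_prop)
  · refine Filter.Eventually.of_forall fun z => (lipschitz_exp_abs hc hs.le).mono fun w hw => ?_
    rw [Metric.mem_ball, Real.dist_eq] at hw
    have := abs_sub_abs_le_abs_sub w y
    change |w| ≤ |y| + 1
    linarith
  · exact ((integrable_exp_abs (c * s)).const_mul _).const_mul _
  · filter_upwards [ae_add_mul_ne_zero y hs.ne'] with z hz
    have h1 : HasDerivAt (fun w => w + z * s) 1 y := (hasDerivAt_id y).add_const _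
    have h2 := (((hasDerivAt_abs_sgn hz).comp y h1).const_mul c).exp
    refine h2.congr_deriv ?_
    dsimp only [Function.comp_apply]
    ring

lemma hasDerivAt_A {b m' t : ℝ} (y : ℝ) (hm' : 0 < m') (ht : t < b) :
    HasDerivAt (A b m' t) (tiltedSign m' (Real.sqrt (b - t)) y) y := by
  have hs : 0 < Real.sqrt (b - t) := Real.sqrt_pos.mpr (sub_pos.mpr ht)
  have hpos := integral_exp_abs_pos y hm'.le hs.le
  have h := ((hasDerivAt_integral_exp_abs y hm'.le hs).log hpos.ne').const_mul (1 / m')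
  refine h.congr_deriv ?_
  unfold tiltedSign
  rw [integral_const_mul, mul_div_assoc, ← mul_assoc, one_div_mul_cancel hm'.ne', one_mul]

lemma continuous_A {b m' t : ℝ} (hm' : 0 < m') (ht : t < b) : Continuous (A b m' t) :=
  continuous_iff_continuousAt.mpr fun y => (hasDerivAt_A y hm' ht).continuousAt

/-- Dominated convergence for a smoothed exponential with a bounded weight `φ`, when the centre `y`
and the scale `s` move simultaneously and the scale shrinks to `0`. -/
lemma tendsto_integral_weight_exp {ι : Type*} {l : Filter ι} [l.IsCountablyGenerated]
    {c y₀ : ℝ} (hc : 0 ≤ c) {φ : ℝ → ℝ} (hφm : Measurable φ) (hφ : ∀ u, |φ u| ≤ 1)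
    (hφc : ContinuousAt φ y₀) {y s : ι → ℝ} (hy : Filter.Tendsto y l (nhds y₀))
    (hs : Filter.Tendsto s l (nhds 0)) (hs0 : ∀ i, 0 ≤ s i) :
    Filter.Tendsto
      (fun i => ∫ z, φ (y i + z * s i) * Real.exp (c * |y i + z * s i|) ∂(gaussianReal 0 1))
      l (nhds (φ y₀ * Real.exp (c * |y₀|))) := by
  have hlim : φ y₀ * Real.exp (c * |y₀|) =
      ∫ _z : ℝ, φ y₀ * Real.exp (c * |y₀|) ∂(gaussianReal 0 1) := by simp
  rw [hlim]
  refine tendsto_integral_filter_of_dominated_convergence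
    (fun z => Real.exp (c * (|y₀| + 1)) * Real.exp (c * 1 * |z|)) ?_ ?_
    ((integrable_exp_abs _).const_mul _) ?_
  · exact Filter.Eventually.of_forall fun i => Measurable.aestronglyMeasurable (by fun_prop)
  · filter_upwards [hy.abs.eventually_le_const (lt_add_one |y₀|),
      hs.eventually_le_const one_pos] with i hi hi'
    refine Filter.Eventually.of_forall fun z => ?_
    rw [norm_mul, Real.norm_of_nonneg (Real.exp_pos _).le, Real.norm_eq_abs]
    exact (mul_le_of_le_one_left (Real.exp_pos _).le (hφ _)).trans
      (exp_abs_le z hc hi (hs0 i) hi')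
  · refine Filter.Eventually.of_forall fun z => ?_
    have h1 : Filter.Tendsto (fun i => y i + z * s i) l (nhds y₀) := by
      simpa using hy.add (hs.const_mul z)
    exact (hφc.tendsto.comp h1).mul ((h1.abs.const_mul c).rexp)

lemma tendsto_integral_exp {ι : Type*} {l : Filter ι} [l.IsCountablyGenerated]
    {c y₀ : ℝ} (hc : 0 ≤ c) {y s : ι → ℝ} (hy : Filter.Tendsto y l (nhds y₀))
    (hs : Filter.Tendsto s l (nhds 0)) (hs0 : ∀ i, 0 ≤ s i) :
    Filter.Tendsto
      (fun i => ∫ z, Real.exp (c * |y i + z * s i|) ∂(gaussianReal 0 1))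
      l (nhds (Real.exp (c * |y₀|))) := by
  simpa using tendsto_integral_weight_exp (φ := fun _ => 1) hc measurable_const (by simp)
    continuousAt_const hy hs hs0

lemma tendsto_tiltedSign {ι : Type*} {l : Filter ι} [l.IsCountablyGenerated]
    {c y₀ : ℝ} (hc : 0 ≤ c) (hy₀ : y₀ ≠ 0) {y s : ι → ℝ} (hy : Filter.Tendsto y l (nhds y₀))
    (hs : Filter.Tendsto s l (nhds 0)) (hs0 : ∀ i, 0 ≤ s i) :
    Filter.Tendsto (fun i => tiltedSign c (s i) (y i)) l (nhds (sgn y₀)) := by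
  have h := (tendsto_integral_weight_exp hc measurable_sgn abs_sgn_le (continuousAt_sgn hy₀)
    hy hs hs0).div (tendsto_integral_exp hc hy hs hs0) (Real.exp_pos _).ne'
  rwa [mul_div_cancel_right₀ _ (Real.exp_pos _).ne'] at h

lemma tendsto_A {b m' y₀ : ℝ} (hm' : 0 < m') {y : ℝ → ℝ}
    (hy : Filter.Tendsto y (nhdsWithin b (Set.Iio b)) (nhds y₀))
    (hs : Filter.Tendsto (fun t => Real.sqrt (b - t)) (nhdsWithin b (Set.Iio b)) (nhds 0)) :
    Filter.Tendsto (fun t => A b m' t (y t)) (nhdsWithin b (Set.Iio b)) (nhds |y₀|) := by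
  have h := ((tendsto_integral_exp hm'.le hy hs fun _ => Real.sqrt_nonneg _).log
    (Real.exp_pos _).ne').const_mul (1 / m')
  rw [Real.log_exp, ← mul_assoc, one_div_mul_cancel hm'.ne', one_mul] at h
  exact h

/-- `A` exceeds `|y|` by at most a constant, uniformly for `t` in `(a, b)`. -/
lemma A_le {a b m' t : ℝ} (y : ℝ) (hm' : 0 < m') (hat : a < t) :
    A b m' t y ≤ |y| + 1 / m' *
      Real.log (∫ z, Real.exp (m' * Real.sqrt (b - a) * |z|) ∂(gaussianReal 0 1)) := by
  have hI : 0 < ∫ z, Real.exp (m' * Real.sqrt (b - a) * |z|) ∂(gaussianReal 0 1) :=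
    integral_exp_pos (integrable_exp_abs _)
  have h1 : ∫ z, Real.exp (m' * |y + z * Real.sqrt (b - t)|) ∂(gaussianReal 0 1) ≤
      Real.exp (m' * |y|) * ∫ z, Real.exp (m' * Real.sqrt (b - a) * |z|) ∂(gaussianReal 0 1) := by
    rw [← integral_const_mul]
    exact integral_mono (integrable_exp_abs_add y hm'.le (Real.sqrt_nonneg _))
      ((integrable_exp_abs _).const_mul _) fun z =>
        exp_abs_le z hm'.le le_rfl (Real.sqrt_nonneg _) (Real.sqrt_le_sqrt (by linarith))
  have h2 := Real.log_le_log (integral_exp_abs_pos y hm'.le (Real.sqrt_nonneg _)) h1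
  rw [Real.log_mul (Real.exp_pos _).ne' hI.ne', Real.log_exp] at h2
  unfold A
  calc _ ≤ 1 / m' * (m' * |y| +
        Real.log (∫ z, Real.exp (m' * Real.sqrt (b - a) * |z|) ∂(gaussianReal 0 1))) := by gcongr
    _ = _ := by field_simp

/-- An integrable function of `z` dominating `exp(m A(t, x + z√(t-a)))` for all `t ∈ (a, b)`. -/
noncomputable def dominator (a b m m' x z : ℝ) : ℝ :=
  Real.exp (m * (1 / m' *
      Real.log (∫ z, Real.exp (m' * Real.sqrt (b - a) * |z|) ∂(gaussianReal 0 1)))) *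
    (Real.exp (m * |x|) * Real.exp (m * Real.sqrt (b - a) * |z|))

lemma integrable_dominator (a b m m' x : ℝ) :
    Integrable (dominator a b m m' x) (gaussianReal 0 1) :=
  ((integrable_exp_abs _).const_mul _).const_mul _

lemma exp_A_le_dominator {a b m m' t : ℝ} (x z : ℝ) (hm : 0 < m) (hm' : 0 < m') (hat : a < t)
    (htb : t < b) :
    Real.exp (m * A b m' t (x + z * Real.sqrt (t - a))) ≤ dominator a b m m' x z := by
  have h1 := mul_le_mul_of_nonneg_left
    (A_le (b := b) (x + z * Real.sqrt (t - a)) hm' hat) hm.le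
  refine (Real.exp_le_exp.mpr h1).trans ?_
  rw [mul_add, Real.exp_add, mul_comm]
  exact mul_le_mul_of_nonneg_left (exp_abs_le z hm.le le_rfl (Real.sqrt_nonneg _)
    (Real.sqrt_le_sqrt (by linarith))) (Real.exp_pos _).le

/-- With exponent `j = 0` this is the limit of the normalising constant, with `j = k` that of the
unnormalised expectation; both have the same value. -/
lemma tendsto_integral_deriv_pow (a b m m' : ℝ) (hab : a < b) (hm : 0 < m) (hm' : 0 < m')
    (j : ℕ) (x : ℝ) :
    Filter.Tendsto
      (fun t => ∫ z, (deriv (A b m' t) (x + z * Real.sqrt (t - a))) ^ (2 * j)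
        * Real.exp (m * A b m' t (x + z * Real.sqrt (t - a))) ∂(gaussianReal 0 1))
      (nhdsWithin b (Set.Iio b))
      (nhds (∫ z, Real.exp (m * |x + z * Real.sqrt (b - a)|) ∂(gaussianReal 0 1))) := by
  have hIoo : ∀ᶠ t in nhdsWithin b (Set.Iio b), a < t ∧ t < b := Ioo_mem_nhdsLT hab
  have hs : Filter.Tendsto (fun t => Real.sqrt (b - t)) (nhdsWithin b (Set.Iio b)) (nhds 0) := by
    have : ContinuousAt (fun t => Real.sqrt (b - t)) b := by fun_prop
    simpa [ContinuousAt] using this.tendsto.mono_left (nhdsWithin_le_nhds (s := Set.Iio b))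
  refine tendsto_integral_filter_of_dominated_convergence (dominator a b m m' x) ?_ ?_
    (integrable_dominator a b m m' x) ?_
  · filter_upwards [hIoo] with t ht
    have h1 : Measurable (deriv (A b m' t)) := measurable_deriv _
    have h2 : Measurable (A b m' t) := (continuous_A hm' ht.2).measurable
    exact Measurable.aestronglyMeasurable (by fun_prop)
  · filter_upwards [hIoo] with t ht
    refine Filter.Eventually.of_forall fun z => ?_
    rw [(hasDerivAt_A _ hm' ht.2).deriv, norm_mul, Real.norm_of_nonneg (Real.exp_pos _).le,
      norm_pow, Real.norm_eq_abs]
    exact (mul_le_of_le_one_left (Real.exp_pos _).le (pow_le_one₀ (abs_nonneg _)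
      (abs_tiltedSign_le _ hm'.le (Real.sqrt_nonneg _)))).trans
        (exp_A_le_dominator x z hm hm' ht.1 ht.2)
  · filter_upwards [ae_add_mul_ne_zero x (Real.sqrt_pos.mpr (sub_pos.mpr hab)).ne'] with z hz
    have hy : Filter.Tendsto (fun t => x + z * Real.sqrt (t - a)) (nhdsWithin b (Set.Iio b))
        (nhds (x + z * Real.sqrt (b - a))) := by
      have : ContinuousAt (fun t => x + z * Real.sqrt (t - a)) b := by fun_prop
      exact this.tendsto.mono_left nhdsWithin_le_nhds
    have h1 := (tendsto_tiltedSign hm'.le hz hy hs fun _ => Real.sqrt_nonneg _).pow (2 * j)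
    rw [pow_mul, sgn_sq hz, one_pow] at h1
    have h2 := h1.mul (((tendsto_A hm' hy hs).const_mul m).rexp)
    rw [one_mul] at h2
    refine h2.congr' ?_
    filter_upwards [hIoo] with t ht
    rw [(hasDerivAt_A _ hm' ht.2).deriv]

lemma integral_V_eq {a b m m' t : ℝ} (hm : 0 < m) (hm' : 0 < m') (hat : a < t) (htb : t < b)
    (k : ℕ) (x : ℝ) :
    ∫ z, (deriv (A b m' t) (x + z * Real.sqrt (t - a))) ^ (2 * k)
        * V a b m m' t x (x + z * Real.sqrt (t - a)) ∂(gaussianReal 0 1) =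
      (∫ z, (deriv (A b m' t) (x + z * Real.sqrt (t - a))) ^ (2 * k)
        * Real.exp (m * A b m' t (x + z * Real.sqrt (t - a))) ∂(gaussianReal 0 1)) /
      ∫ z, Real.exp (m * A b m' t (x + z * Real.sqrt (t - a))) ∂(gaussianReal 0 1) := by
  have hint : Integrable (fun z => Real.exp (m * A b m' t (x + z * Real.sqrt (t - a))))
      (gaussianReal 0 1) := by
    have h2 := continuous_A (b := b) hm' htb
    refine (integrable_dominator a b m m' x).mono'
      (Continuous.aestronglyMeasurable (by fun_prop)) (Filter.Eventually.of_forall fun z => ?_)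
    rw [Real.norm_of_nonneg (Real.exp_pos _).le]
    exact exp_A_le_dominator x z hm hm' hat htb
  have hB : Real.exp (m * B a b m m' t x) =
      ∫ z, Real.exp (m * A b m' t (x + z * Real.sqrt (t - a))) ∂(gaussianReal 0 1) := by
    unfold B
    rw [← mul_assoc, mul_one_div_cancel hm.ne', one_mul, Real.exp_log (integral_exp_pos hint)]
  rw [← hB, ← integral_div]
  refine integral_congr_ae (Filter.Eventually.of_forall fun z => ?_)
  simp only [V]
  rw [mul_sub, Real.exp_sub, mul_div_assoc]

/-- `E[(∂ₓA(t, x+z√(t-a)))^{2k} V(t,x,x+z√(t-a))] → 1` as `t → b⁻`. -/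
theorem even_power_V_tendsto_one (a b m m' : ℝ) (ha : 0 ≤ a) (hab : a < b)
    (hm : 0 < m) (hmm' : m < m') :
    ∀ k : ℕ, 1 ≤ k → ∀ x : ℝ,
      Filter.Tendsto
        (fun t => ∫ z, (deriv (A b m' t) (x + z * Real.sqrt (t - a))) ^ (2 * k)
            * V a b m m' t x (x + z * Real.sqrt (t - a)) ∂(gaussianReal 0 1))
        (nhdsWithin b (Set.Iio b)) (nhds 1) := by
  intro k _ x
  have hm' : 0 < m' := hm.trans hmm'
  have hpos := integral_exp_abs_pos x hm.le (Real.sqrt_nonneg (b - a))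
  have h := (tendsto_integral_deriv_pow a b m m' hab hm hm' k x).div
    (tendsto_integral_deriv_pow a b m m' hab hm hm' 0 x) hpos.ne'
  rw [div_self hpos.ne'] at h
  refine h.congr' ?_
  filter_upwards [Ioo_mem_nhdsLT hab] with t ht
  rw [integral_V_eq hm hm' ht.1 ht.2]
  simp
end

section
/- For every (t,x) ∈ [a,b) × ℝ one has the identity ∂_{xx} A(t,x) = m'( 1 − (∂_x A(t,x))² ) + 2Γ(t,x), where Γ(t,x) = (2π(b−t))^{−1/2} e^{−x²/(2(b−t))} / ( g(t,x) + g(t,−x) ). -/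
/-!
Write `s = √(b - t)` and let `φ`, `Φ` be the standard Gaussian density and distribution function.
Splitting the expectation at `z = -x / s`, where `x + z s` changes sign, and completing the square
on each half gives `E exp (m' |x + z s|) = h x`, with `h x = g x + g (-x)`
(`integral_exp_abs_eq`).

The product rule and `exp (s² m'² / 2 + m' x) φ (m' s + x / s) = φ (x / s)` give
`g' = m' g + p`, where `p x = (2π s²)^(-1/2) exp (-x² / (2 s²))` (`hasDerivAt_gfun`).
Since `p` is even, `h' = m' (g x - g (-x))` and `h'' = m'² h + 2 m' p`. As `A = (1 / m') log h`,
it follows that `∂ₓA = (g x - g (-x)) / h` and `∂ₓₓA = m' (1 - (∂ₓA)²) + 2 p / h`.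
-/

open MeasureTheory ProbabilityTheory

/-- The standard Gaussian cumulative distribution function. -/
noncomputable def stdGaussCDF (x : ℝ) : ℝ :=
  ∫ u in Set.Iic x, Real.exp (-u ^ 2 / 2) / Real.sqrt (2 * Real.pi)

/-- `g(t,x) = exp((b-t)m'²/2 + m'x) Φ(m'√(b-t) + x/√(b-t))`. -/
noncomputable def gfun (b m' t x : ℝ) : ℝ :=
  Real.exp ((b - t) * m' ^ 2 / 2 + m' * x) *
    stdGaussCDF (m' * Real.sqrt (b - t) + x / Real.sqrt (b - t))

/-- `Γ(t,x) = (2π(b-t))^{-1/2} e^{-x²/(2(b-t))} / (g(t,x) + g(t,-x))`. -/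
noncomputable def Gam (b m' t x : ℝ) : ℝ :=
  (Real.sqrt (2 * Real.pi * (b - t)))⁻¹ * Real.exp (-x ^ 2 / (2 * (b - t)))
    / (gfun b m' t x + gfun b m' t (-x))

/-- The standard Gaussian density, written as in the integrand of `stdGaussCDF`. -/
noncomputable def gaussDens (u : ℝ) : ℝ := Real.exp (-u ^ 2 / 2) / Real.sqrt (2 * Real.pi)

lemma continuous_gaussDens : Continuous gaussDens := by
  unfold gaussDens; fun_prop

lemma gaussDens_pos (u : ℝ) : 0 < gaussDens u := by
  unfold gaussDens; positivity

lemma integrable_gaussDens : Integrable gaussDens := by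
  unfold gaussDens
  refine Integrable.div_const ?_ _
  refine (integrable_exp_neg_mul_sq (b := 1 / 2) (by norm_num)).congr ?_
  filter_upwards with u
  ring_nf

lemma gaussianPDFReal_eq_gaussDens (z : ℝ) : gaussianPDFReal 0 1 z = gaussDens z := by
  simp [gaussianPDFReal, gaussDens]
  ring

lemma hasDerivAt_stdGaussCDF (x : ℝ) : HasDerivAt stdGaussCDF (gaussDens x) x := by
  have hcdf : stdGaussCDF =
      fun y => (∫ u in Set.Iic (0 : ℝ), gaussDens u) + ∫ u in (0 : ℝ)..y, gaussDens u := by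
    funext y
    have := intervalIntegral.integral_Iic_sub_Iic (a := (0 : ℝ)) (b := y) (f := gaussDens)
      integrable_gaussDens.integrableOn integrable_gaussDens.integrableOn
    rw [← this]
    simp [stdGaussCDF, gaussDens]
  rw [hcdf]
  exact (intervalIntegral.integral_hasDerivAt_right
    (continuous_gaussDens.intervalIntegrable _ _)
    continuous_gaussDens.aestronglyMeasurable.stronglyMeasurableAtFilter
    continuous_gaussDens.continuousAt).const_add _

lemma stdGaussCDF_pos (x : ℝ) : 0 < stdGaussCDF x := by
  change 0 < ∫ u in Set.Iic x, gaussDens u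
  rw [setIntegral_pos_iff_support_of_nonneg_ae]
  · have : Function.support gaussDens = Set.univ := by
      ext u; simp [(gaussDens_pos u).ne']
    simp [this]
  · exact Filter.Eventually.of_forall fun u => (gaussDens_pos u).le
  · exact integrable_gaussDens.integrableOn

lemma gfun_pos (b m' t x : ℝ) : 0 < gfun b m' t x :=
  mul_pos (Real.exp_pos _) (stdGaussCDF_pos _)

/-- The expectation defining `A`: split at the sign change of `x + z √(b - t)` and complete the
square on both halves. -/
lemma integral_exp_abs_eq (b m' t x : ℝ) (ht : t < b) :
    ∫ z, Real.exp (m' * |x + z * Real.sqrt (b - t)|) ∂(gaussianReal 0 1)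
      = gfun b m' t x + gfun b m' t (-x) := by
  rw [integral_gaussianReal_eq_integral_smul one_ne_zero]
  unfold gfun
  have hs : 0 < Real.sqrt (b - t) := Real.sqrt_pos.2 (by linarith)
  have hs2 : b - t = Real.sqrt (b - t) ^ 2 := (Real.sq_sqrt (by linarith)).symm
  set s := Real.sqrt (b - t)
  rw [hs2]
  -- Exactly one of the two indicators is nonzero at each `z`, including `z = -x / s`.
  have hsplit : ∀ z, gaussianPDFReal 0 1 z • Real.exp (m' * |x + z * s|) =
      Real.exp (s ^ 2 * m' ^ 2 / 2 + m' * x) *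
        (Set.Iic (m' * s + x / s)).indicator gaussDens (m' * s - z) +
      Real.exp (s ^ 2 * m' ^ 2 / 2 + m' * -x) *
        (Set.Iio (m' * s + -x / s)).indicator gaussDens (z + m' * s) := by
    intro z
    rw [gaussianPDFReal_eq_gaussDens, smul_eq_mul]
    have hxs : x / s * s = x := div_mul_cancel₀ _ hs.ne'
    rcases le_or_gt 0 (x + z * s) with h | h
    · have hz : -(x / s) ≤ z := by
        by_contra! hc
        nlinarith
      rw [Set.indicator_of_mem (by simp only [Set.mem_Iic]; linarith),
        Set.indicator_of_notMem (by simp only [Set.mem_Iio, neg_div]; linarith),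
        abs_of_nonneg h, mul_zero, add_zero]
      unfold gaussDens
      rw [div_mul_eq_mul_div, mul_div_assoc', ← Real.exp_add, ← Real.exp_add]
      ring_nf
    · have hz : z < -(x / s) := by
        by_contra! hc
        nlinarith
      rw [Set.indicator_of_notMem (by simp only [Set.mem_Iic]; linarith),
        Set.indicator_of_mem (by simp only [Set.mem_Iio, neg_div]; linarith),
        abs_of_neg h, mul_zero, zero_add]
      unfold gaussDens
      rw [div_mul_eq_mul_div, mul_div_assoc', ← Real.exp_add, ← Real.exp_add]
      ring_nf
  simp_rw [hsplit]
  have hi1 := integrable_gaussDens.indicator (measurableSet_Iic (a := m' * s + x / s))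
  have hi2 := integrable_gaussDens.indicator (measurableSet_Iio (a := m' * s + -x / s))
  rw [integral_add ((hi1.comp_sub_left (m' * s)).const_mul _)
      ((hi2.comp_add_right (m' * s)).const_mul _),
    integral_const_mul, integral_const_mul,
    integral_sub_left_eq_self (fun z => (Set.Iic (m' * s + x / s)).indicator gaussDens z) volume,
    integral_add_right_eq_self (fun z => (Set.Iio (m' * s + -x / s)).indicator gaussDens z),
    integral_indicator measurableSet_Iic, integral_indicator measurableSet_Iio,
    ← integral_Iic_eq_integral_Iio]
  rfl

/-- The numerator of `Gam`, the density of a centred Gaussian of variance `b - t`. -/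
noncomputable def heatDens (b t x : ℝ) : ℝ :=
  (Real.sqrt (2 * Real.pi * (b - t)))⁻¹ * Real.exp (-x ^ 2 / (2 * (b - t)))

lemma heatDens_neg (b t x : ℝ) : heatDens b t (-x) = heatDens b t x := by
  simp [heatDens]

lemma hasDerivAt_gfun (b m' t x : ℝ) (ht : t < b) :
    HasDerivAt (gfun b m' t) (m' * gfun b m' t x + heatDens b t x) x := by
  have hs : 0 < Real.sqrt (b - t) := Real.sqrt_pos.2 (by linarith)
  have hs2 : b - t = Real.sqrt (b - t) ^ 2 := (Real.sq_sqrt (by linarith)).symm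
  have h1 : HasDerivAt (fun y => Real.exp ((b - t) * m' ^ 2 / 2 + m' * y))
      (Real.exp ((b - t) * m' ^ 2 / 2 + m' * x) * (m' * 1)) x :=
    (((hasDerivAt_id x).const_mul m').const_add _).exp
  have h2 : HasDerivAt (fun y => m' * Real.sqrt (b - t) + y / Real.sqrt (b - t))
      (1 / Real.sqrt (b - t)) x :=
    ((hasDerivAt_id x).div_const _).const_add _
  have h3 := (hasDerivAt_stdGaussCDF
    (m' * Real.sqrt (b - t) + x / Real.sqrt (b - t))).comp x h2
  refine (h1.mul h3).congr_deriv ?_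
  have hp : Real.exp ((b - t) * m' ^ 2 / 2 + m' * x) *
      (gaussDens (m' * Real.sqrt (b - t) + x / Real.sqrt (b - t)) * (1 / Real.sqrt (b - t)))
      = heatDens b t x := by
    unfold gaussDens heatDens
    rw [Real.sqrt_mul (by positivity : 0 ≤ 2 * Real.pi)]
    set s := Real.sqrt (b - t)
    rw [hs2, div_mul_div_comm, mul_one, mul_div_assoc', ← Real.exp_add, inv_mul_eq_div]
    congr 2
    field_simp
    ring
  rw [hp]
  simp only [gfun, Function.comp]
  ring

lemma hasDerivAt_gfun_neg (b m' t x : ℝ) (ht : t < b) :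
    HasDerivAt (fun y => gfun b m' t (-y)) (-(m' * gfun b m' t (-x) + heatDens b t x)) x := by
  have h := (hasDerivAt_gfun b m' t (-x) ht).comp x (hasDerivAt_neg x)
  rw [heatDens_neg] at h
  exact h.congr_deriv (by ring)

lemma deriv_A (b m' t : ℝ) (ht : t < b) (hm' : 0 < m') :
    deriv (A b m' t) = fun x =>
      (gfun b m' t x - gfun b m' t (-x)) / (gfun b m' t x + gfun b m' t (-x)) := by
  have hA : A b m' t =
      fun x => (1 / m') * Real.log (gfun b m' t x + gfun b m' t (-x)) := by
    funext x
    rw [A, integral_exp_abs_eq b m' t x ht]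
  funext x
  have hpos : 0 < gfun b m' t x + gfun b m' t (-x) := add_pos (gfun_pos ..) (gfun_pos ..)
  rw [hA]
  refine HasDerivAt.deriv ((((((hasDerivAt_gfun b m' t x ht).add
    (hasDerivAt_gfun_neg b m' t x ht)).log hpos.ne').const_mul (1 / m'))).congr_deriv ?_)
  simp only [Pi.add_apply]
  field_simp
  ring

/-- `∂ₓₓA(t,x) = m'(1 - (∂ₓA(t,x))²) + 2Γ(t,x)` on `[a,b) × ℝ`. -/
theorem A_second_deriv_identity (a b m' : ℝ) (ha : 0 ≤ a) (hab : a < b) (hm' : 0 < m') :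
    ∀ t ∈ Set.Ico a b, ∀ x : ℝ,
      deriv (deriv (A b m' t)) x
        = m' * (1 - (deriv (A b m' t) x) ^ 2) + 2 * Gam b m' t x := by
  intro t ht x
  have hpos : 0 < gfun b m' t x + gfun b m' t (-x) := add_pos (gfun_pos ..) (gfun_pos ..)
  have h1 := hasDerivAt_gfun b m' t x ht.2
  have h2 := hasDerivAt_gfun_neg b m' t x ht.2
  have hGam : Gam b m' t x = heatDens b t x / (gfun b m' t x + gfun b m' t (-x)) := rfl
  rw [deriv_A b m' t ht.2 hm', hGam]
  refine HasDerivAt.deriv (((h1.sub h2).div (h1.add h2) hpos.ne').congr_deriv ?_)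
  simp only [Pi.add_apply, Pi.sub_apply]
  field_simp
  ring
end
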